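/- arXiv:2511.06628 — 3 statements merged into one kernel-verified Lean document; each statement's English description precedes it below -/
import Mathlib

section
/- Let 𝒦 ⊆ ℝⁿ be a nonempty set closed under addition, and let ℓ : 𝒦 → ℝ be strictly subadditive, i.e. ℓ(ξ + ξ') < ℓ(ξ) + ℓ(ξ') for all ξ, ξ' ∈ 𝒦. Let V : ℝⁿ → ℝ, let x ∈ ℝⁿ and ξ̂ ∈ 𝒦 be such that V(x) = V(x + ξ̂) + ℓ(ξ̂) and V(x) ≤ V(x + ζ) + ℓ(ζ) for every ζ ∈ 𝒦 (i.e. the intervention infimum at x equals V(x) and is attained at ξ̂). Then for every ξ̃ ∈ 𝒦 one has the strict inequality V(x + ξ̂) < V(x + ξ̂ + ξ̃) + ℓ(ξ̃). -/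
/-- Pointwise form of Proposition 3.2: if the intervention infimum at `x` equals
`V x` and is attained at `ξ̂`, then after the impulse `ξ̂` no further immediate
impulse can be optimal (strict inequality). -/
theorem no_second_immediate_impulse
    {n : ℕ} (𝒦 : Set (Fin n → ℝ)) (h𝒦 : 𝒦.Nonempty)
    (hadd : ∀ a ∈ 𝒦, ∀ b ∈ 𝒦, a + b ∈ 𝒦)
    (ℓ : (Fin n → ℝ) → ℝ)
    (hsub : ∀ ξ ∈ 𝒦, ∀ ξ' ∈ 𝒦, ℓ (ξ + ξ') < ℓ ξ + ℓ ξ')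
    (V : (Fin n → ℝ) → ℝ) (x : Fin n → ℝ)
    (ξhat : Fin n → ℝ) (hξhat : ξhat ∈ 𝒦)
    (heq : V x = V (x + ξhat) + ℓ ξhat)
    (hopt : ∀ ζ ∈ 𝒦, V x ≤ V (x + ζ) + ℓ ζ) :
    ∀ ξtil ∈ 𝒦, V (x + ξhat) < V (x + ξhat + ξtil) + ℓ ξtil := by
  intro ξtil h
  have h1 := hopt _ (hadd _ hξhat _ h)
  have h2 := hsub _ hξhat _ h
  rw [← add_assoc] at h1
  linarith
end

section
/- Let 𝒦 ⊆ ℝⁿ be a nonempty set closed under addition, and let ℓ : 𝒦 → ℝ be strictly subadditive, i.e. ℓ(ξ + ξ') < ℓ(ξ) + ℓ(ξ') for all ξ, ξ' ∈ 𝒦. Let V : ℝⁿ → ℝ, define the intervention operator N[V](y) = inf_{ξ ∈ 𝒦} (V(y + ξ) + ℓ(ξ)) (infimum in ℝ of the set {V(y + ξ) + ℓ(ξ) : ξ ∈ 𝒦}, assumed bounded below). Suppose x ∈ ℝⁿ and ξ̂ ∈ 𝒦 satisfy V(x) = V(x + ξ̂) + ℓ(ξ̂) and V(x) ≤ V(x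 + ζ) + ℓ(ζ) for every ζ ∈ 𝒦, and suppose the infimum defining N[V](x + ξ̂) is attained at some ξ̃ ∈ 𝒦, i.e. N[V](x + ξ̂) = V(x + ξ̂ + ξ̃) + ℓ(ξ̃). Then V(x + ξ̂) < N[V](x + ξ̂). -/
/-- Proposition 3.2: if `V x = N[V] x` with the intervention infimum at `x`
attained at `ξ̂`, and the infimum defining `N[V] (x + ξ̂)` is attained, then
`V (x + ξ̂) < N[V] (x + ξ̂)`. -/
theorem value_lt_intervention_after_optimal_impulse
    {n : ℕ} (𝒦 : Set (Fin n → ℝ)) (h𝒦 : 𝒦.Nonempty)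
    (hadd : ∀ a ∈ 𝒦, ∀ b ∈ 𝒦, a + b ∈ 𝒦)
    (ℓ : (Fin n → ℝ) → ℝ)
    (hsub : ∀ ξ ∈ 𝒦, ∀ ξ' ∈ 𝒦, ℓ (ξ + ξ') < ℓ ξ + ℓ ξ')
    (V : (Fin n → ℝ) → ℝ)
    (N : (Fin n → ℝ) → ℝ)
    (hN : ∀ y, N y = sInf ((fun ξ => V (y + ξ) + ℓ ξ) '' 𝒦))
    (hbdd : ∀ y, BddBelow ((fun ξ => V (y + ξ) + ℓ ξ) '' 𝒦))
    (x : Fin n → ℝ) (ξhat : Fin n → ℝ) (hξhat : ξhat ∈ 𝒦)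
    (heq : V x = V (x + ξhat) + ℓ ξhat)
    (hopt : ∀ ζ ∈ 𝒦, V x ≤ V (x + ζ) + ℓ ζ)
    (ξtil : Fin n → ℝ) (hξtil : ξtil ∈ 𝒦)
    (hatt : N (x + ξhat) = V (x + ξhat + ξtil) + ℓ ξtil) :
    V (x + ξhat) < N (x + ξhat) := by
  have h1 := hopt _ (hadd _ hξhat _ hξtil)
  have h2 := hsub _ hξhat _ hξtil
  rw [← add_assoc] at h1
  rw [hatt]
  linarith
end

section
/- For every real constant c, the function x ↦ sin(eˣ) + c x² is not convex on ℝ. In particular, the bounded (hence linearly growing) function φ(x) = sin(eˣ) is not semi-convex: there is no constant K such that φ differs from a convex function by the quadratic K x². -/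
/-- The bounded function `x ↦ sin (exp x)` is not semi-convex: for no constant
`c` is `x ↦ sin (exp x) + c x²` convex on `ℝ` (remark after Definition 2.1). -/
theorem sin_exp_not_semiconvex (c : ℝ) :
    ¬ ConvexOn ℝ Set.univ (fun x : ℝ => Real.sin (Real.exp x) + c * x ^ 2) := by
  intro hf
  obtain ⟨m, hm⟩ := exists_nat_gt c
  obtain ⟨n, hn1, hcn⟩ : ∃ n : ℕ, (1 : ℝ) ≤ n ∧ c ≤ n :=
    ⟨m + 1, by push_cast; linarith [Nat.cast_nonneg (α := ℝ) m], by push_cast; linarith⟩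
  have hpi := Real.pi_pos
  obtain ⟨A, hA⟩ : ∃ A : ℝ, A = Real.pi / 2 + n * (2 * Real.pi) := ⟨_, rfl⟩
  have hA2 : 2 * n * Real.pi ≤ A := by rw [hA]; linarith
  have hA0 : 0 < A := by rw [hA]; positivity
  have hsA : Real.sin A = 1 := by
    rw [hA, Real.sin_add_nat_mul_two_pi, Real.sin_pi_div_two]
  have hsB : Real.sin (A + Real.pi) = -1 := by rw [Real.sin_add_pi, hsA]
  have hq : 0 < Real.pi / A := by positivity
  obtain ⟨h, hh⟩ : ∃ h : ℝ, h = Real.log (1 + Real.pi / A) := ⟨_, rfl⟩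
  have hh0 : 0 ≤ h := by rw [hh]; exact Real.log_nonneg (by linarith)
  have hh1 : h ≤ Real.pi / A := by
    rw [hh]; linarith [Real.log_le_sub_one_of_pos (show 0 < 1 + Real.pi / A by linarith)]
  have hexp : Real.exp (Real.log A + h) = A + Real.pi := by
    rw [Real.exp_add, Real.exp_log hA0, hh, Real.exp_log (by linarith)]
    field_simp
  have hnh : 2 * n * h ≤ 1 := by
    have h1 : h * A ≤ Real.pi := (le_div_iff₀ hA0).1 hh1
    have h2 : h * (2 * n * Real.pi) ≤ h * A := mul_le_mul_of_nonneg_left hA2 hh0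
    have h3 : (2 * n * h) * Real.pi ≤ 1 * Real.pi := by linarith
    exact le_of_mul_le_mul_right h3 hpi
  have key := hf.2 (Set.mem_univ (Real.log A - h)) (Set.mem_univ (Real.log A + h))
    (show (0 : ℝ) ≤ 1 / 2 by norm_num) (show (0 : ℝ) ≤ 1 / 2 by norm_num) (by norm_num)
  simp only [smul_eq_mul] at key
  rw [show 1 / 2 * (Real.log A - h) + 1 / 2 * (Real.log A + h) = Real.log A by ring,
    Real.exp_log hA0, hexp, hsA, hsB] at key
  have hs := Real.sin_le_one (Real.exp (Real.log A - h))
  have hc : 1 ≤ c * h ^ 2 := by nlinarith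
  have hc2 : c * h ^ 2 ≤ n * h ^ 2 := mul_le_mul_of_nonneg_right hcn (sq_nonneg h)
  have h4 : 2 * n * h * h ≤ 1 * h := mul_le_mul_of_nonneg_right hnh hh0
  have h5 : 1 * h ≤ n * h := mul_le_mul_of_nonneg_right hn1 hh0
  nlinarith
end
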